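/- Suppose there exist a diagonal positive definite Q ∈ ℝ^{n×n}, a diagonal positive definite S ∈ ℝ^{m×m}, a symmetric positive definite Γ̂ ∈ ℝ^{n×n}, scalars μ, α > 0, and W ∈ ℝ^{m×n} such that: (D1) [[−QΛ⁻¹, HQ + BW, BS],[(HQ + BW)ᵀ, −e^{−μ}ΛQ, −Wᵀ],[(BS)ᵀ, −W, −2S]] is negative semidefinite; (D2) [[Γ̂, N],[Nᵀ, I]] is positive semidefinite; (D3) Q(αI − μΛ) + Γ̂ is negative semidefinite. Set K := WQ⁻¹ and H_cl := H + BK. Then for every T₀ > 0, every continuously differentiable X : [0,T₀] × [0,1] → ℝⁿ and continuous d : [0,T₀] × [0,1] → ℝ^q satisfying ∂ₜX(t,z) + Λ ∂_zX(t,z) = N d(t,z) on [0,T₀] × [0,1] and X(t,0) = H_cl X(t,1) + Bφ(K X(t,1)) for all t ∈ [0,T₀], one has for all t ∈ [0,T₀]: (∫₀¹ |X(t,z)|² dz)^{1/2} ≤ √(λ_max(Q)/λ_min(Q))·e^{μ/2}·e^{−(α/2)t}·(∫₀¹ |X(0,z)|² dz)^{1/2} + √(λ_max(Q))·e^{μ/2}·(∫₀ᵗ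 ∫₀¹ |d(θ,z)|² dz dθ)^{1/2}. -/

import Mathlib

open Matrix Set

/-- Componentwise saturation function with saturation levels `ubar`. -/
noncomputable def saturate {m : ℕ} (ubar : Fin m → ℝ) (u : Fin m → ℝ) : Fin m → ℝ :=
  fun i => min |u i| (ubar i) * Real.sign (u i)

/-- Dead-zone nonlinearity `φ(u) = σ(u) - u`. -/
noncomputable def deadzone {m : ℕ} (ubar : Fin m → ℝ) (u : Fin m → ℝ) : Fin m → ℝ :=
  saturate ubar u - u

/-- The Euclidean norm on `ℝ^q`. -/
noncomputable def enorm' {q : ℕ} (x : Fin q → ℝ) : ℝ := Real.sqrt (∑ i, (x i) ^ 2)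

lemma dz_sector {m : ℕ} (ubar : Fin m → ℝ) (hubar : ∀ i, 0 < ubar i) (u : Fin m → ℝ) (i : Fin m) :
    deadzone ubar u i * (deadzone ubar u i + u i) ≤ 0 := by
  have hu := hubar i
  simp only [deadzone, saturate, Pi.sub_apply]
  rcases lt_trichotomy (u i) 0 with h | h | h
  · rw [Real.sign_of_neg h, abs_of_neg h]
    rcases le_total (-u i) (ubar i) with h1 | h1
    · rw [min_eq_left h1]; nlinarith
    · rw [min_eq_right h1]; nlinarith
  · simp [h]
  · rw [Real.sign_of_pos h, abs_of_pos h]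
    rcases le_total (u i) (ubar i) with h1 | h1
    · rw [min_eq_left h1]; nlinarith
    · rw [min_eq_right h1]; nlinarith

lemma inv_diag' {n : ℕ} (a : Fin n → ℝ) (ha : ∀ i, 0 < a i) :
    (Matrix.diagonal a)⁻¹ = Matrix.diagonal (fun i => (a i)⁻¹) := by
  apply Matrix.inv_eq_right_inv
  rw [Matrix.diagonal_mul_diagonal]
  have : (fun i => a i * (a i)⁻¹) = fun _ => 1 := by
    funext i; exact mul_inv_cancel₀ (ha i).ne'
  rw [this, Matrix.diagonal_one]

lemma bc_ineq {n m : ℕ} (l p : Fin n → ℝ) (s : Fin m → ℝ)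
    (hl : ∀ i, 0 < l i) (hp : ∀ i, 0 < p i) (hs : ∀ i, 0 < s i)
    (H : Matrix (Fin n) (Fin n) ℝ) (B : Matrix (Fin n) (Fin m) ℝ)
    (ubar : Fin m → ℝ) (hubar : ∀ i, 0 < ubar i) (μ : ℝ)
    (W : Matrix (Fin m) (Fin n) ℝ)
    (hD1 : (-(Matrix.fromBlocks
        (Matrix.fromBlocks
          (-(diagonal p * (diagonal l)⁻¹)) (H * diagonal p + B * W)
          ((H * diagonal p + B * W)ᵀ) (-(Real.exp (-μ) • (diagonal l * diagonal p))))
        (Matrix.fromRows (B * diagonal s) (-Wᵀ))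
        (Matrix.fromCols ((B * diagonal s)ᵀ) (-W))
        (-(2 • diagonal s)))).PosSemidef)
    (x0 x1 : Fin n → ℝ)
    (hbc : x0 = (H + B * (W * (diagonal p)⁻¹)).mulVec x1 +
        B.mulVec (deadzone ubar ((W * (diagonal p)⁻¹).mulVec x1))) :
    ∑ i, l i / p i * x0 i ^ 2 ≤ Real.exp (-μ) * ∑ i, l i / p i * x1 i ^ 2 := by
  set u := (W * (diagonal p)⁻¹).mulVec x1 with hu
  set φ := deadzone ubar u with hφ
  let a : Fin n → ℝ := fun i => l i / p i * x0 i
  let b : Fin n → ℝ := fun i => (p i)⁻¹ * x1 i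
  let c : Fin m → ℝ := fun i => (s i)⁻¹ * φ i
  have hb : (diagonal p)⁻¹ *ᵥ x1 = b := by
    rw [inv_diag' p hp]; funext i; simp [Matrix.mulVec_diagonal, b]
  have hub : u = W *ᵥ b := by rw [hu, ← Matrix.mulVec_mulVec, hb]
  have hpb : diagonal p *ᵥ b = x1 := by
    funext i; simp [Matrix.mulVec_diagonal, b, (hp i).ne']
  have hsc : diagonal s *ᵥ c = φ := by
    funext i; simp [Matrix.mulVec_diagonal, c, (hs i).ne']
  have hx0 : (H * diagonal p + B * W) *ᵥ b + (B * diagonal s) *ᵥ c = x0 := by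
    rw [Matrix.add_mulVec, ← Matrix.mulVec_mulVec, ← Matrix.mulVec_mulVec, ← Matrix.mulVec_mulVec,
      hpb, hsc, hbc, Matrix.add_mulVec, ← Matrix.mulVec_mulVec, ← Matrix.mulVec_mulVec, hb]
  have key := hD1.dotProduct_mulVec_nonneg (Sum.elim (Sum.elim a b) c)
  have tr : ∀ {k j : ℕ} (M : Matrix (Fin k) (Fin j) ℝ) (v : Fin j → ℝ) (w : Fin k → ℝ),
      v ⬝ᵥ (Mᵀ *ᵥ w) = w ⬝ᵥ (M *ᵥ v) := by
    intro k j M v w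
    rw [Matrix.mulVec_transpose, dotProduct_comm, Matrix.dotProduct_mulVec]
  have e1 : a ⬝ᵥ ((H * diagonal p + B * W) *ᵥ b) + a ⬝ᵥ ((B * diagonal s) *ᵥ c)
      = ∑ i, l i / p i * x0 i ^ 2 := by
    rw [← dotProduct_add, hx0]
    simp only [dotProduct, a]
    exact Finset.sum_congr rfl fun i _ => by ring
  have e2 : a ⬝ᵥ ((diagonal p * (diagonal l)⁻¹) *ᵥ a) = ∑ i, l i / p i * x0 i ^ 2 := by
    rw [inv_diag' l hl, Matrix.diagonal_mul_diagonal]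
    simp only [dotProduct, Matrix.mulVec_diagonal, a]
    refine Finset.sum_congr rfl fun i _ => ?_
    have := (hl i).ne'
    have := (hp i).ne'
    field_simp
  have e3 : b ⬝ᵥ ((diagonal l * diagonal p) *ᵥ b) = ∑ i, l i / p i * x1 i ^ 2 := by
    rw [Matrix.diagonal_mul_diagonal]
    simp only [dotProduct, Matrix.mulVec_diagonal, b]
    refine Finset.sum_congr rfl fun i _ => ?_
    have := (hp i).ne'
    field_simp
  have e4 : c ⬝ᵥ (W *ᵥ b) + c ⬝ᵥ (diagonal s *ᵥ c) ≤ 0 := by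
    rw [← dotProduct_add, hsc, ← hub]
    simp only [dotProduct, c, Pi.add_apply]
    refine Finset.sum_nonpos fun i _ => ?_
    have h1 := dz_sector ubar hubar u i
    have h2 := inv_pos.2 (hs i)
    rw [← hφ] at h1
    nlinarith
  simp only [star_trivial, Matrix.neg_mulVec, Matrix.fromBlocks_mulVec, Matrix.fromRows_mulVec,
    Matrix.fromCols_mulVec_sumElim, Sum.elim_comp_inl, Sum.elim_comp_inr, dotProduct_neg,
    Matrix.smul_mulVec, Matrix.fromCols_mulVec] at key
  rw [show ∀ (f g : Fin n → ℝ) (f' g' : Fin n → ℝ), Sum.elim f g + Sum.elim f' g' = Sum.elim (f+f') (g+g') from fun f g f' g' => by ext (i|i) <;> rfl] at key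
  simp only [sumElim_dotProduct_sumElim, dotProduct_add, dotProduct_neg, dotProduct_smul, tr, smul_eq_mul] at key
  have e5 : (2:ℕ) • (c ⬝ᵥ (diagonal s *ᵥ c)) = 2 * (c ⬝ᵥ (diagonal s *ᵥ c)) := by simp
  rw [e5] at key
  rw [e2, e3] at key
  linarith

lemma pt_ineq {n q : ℕ} (l p : Fin n → ℝ) (hp : ∀ i, 0 < p i)
    (N : Matrix (Fin n) (Fin q) ℝ) (G : Matrix (Fin n) (Fin n) ℝ) (μ α : ℝ)
    (hD2 : (Matrix.fromBlocks G N Nᵀ (1 : Matrix (Fin q) (Fin q) ℝ)).PosSemidef)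
    (hD3 : (-(diagonal p * (α • (1 : Matrix (Fin n) (Fin n) ℝ) - μ • diagonal l) + G)).PosSemidef)
    (x : Fin n → ℝ) (d : Fin q → ℝ) :
    α * ∑ i, (p i)⁻¹ * x i ^ 2 + 2 * ∑ i, (p i)⁻¹ * x i * (N *ᵥ d) i
      ≤ μ * ∑ i, l i / p i * x i ^ 2 + ∑ i, d i ^ 2 := by
  let v : Fin n → ℝ := fun i => (p i)⁻¹ * x i
  have k2 := hD2.dotProduct_mulVec_nonneg (Sum.elim v (-d))
  have k3 := hD3.dotProduct_mulVec_nonneg v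
  have tr : ∀ {k j : ℕ} (M : Matrix (Fin k) (Fin j) ℝ) (v : Fin j → ℝ) (w : Fin k → ℝ),
      v ⬝ᵥ (Mᵀ *ᵥ w) = w ⬝ᵥ (M *ᵥ v) := by
    intro k j M v w
    rw [Matrix.mulVec_transpose, dotProduct_comm, Matrix.dotProduct_mulVec]
  simp only [star_trivial, Matrix.fromBlocks_mulVec, Sum.elim_comp_inl, Sum.elim_comp_inr,
    sumElim_dotProduct_sumElim, dotProduct_add, dotProduct_neg, neg_dotProduct, tr,
    Matrix.mulVec_neg, Matrix.one_mulVec, neg_neg] at k2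
  simp only [star_trivial, Matrix.neg_mulVec, Matrix.add_mulVec, dotProduct_neg,
    dotProduct_add] at k3
  have e1 : v ⬝ᵥ ((diagonal p * (α • (1 : Matrix (Fin n) (Fin n) ℝ) - μ • diagonal l)) *ᵥ v)
      = α * ∑ i, (p i)⁻¹ * x i ^ 2 - μ * ∑ i, l i / p i * x i ^ 2 := by
    rw [← Matrix.mulVec_mulVec, Matrix.sub_mulVec, Matrix.smul_mulVec, Matrix.smul_mulVec,
      Matrix.one_mulVec, Finset.mul_sum, Finset.mul_sum, ← Finset.sum_sub_distrib]
    simp only [dotProduct, Matrix.mulVec_diagonal, Pi.sub_apply, Pi.smul_apply, smul_eq_mul, v]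
    refine Finset.sum_congr rfl fun i _ => ?_
    have := (hp i).ne'
    field_simp
  have e2 : v ⬝ᵥ (N *ᵥ d) = ∑ i, (p i)⁻¹ * x i * (N *ᵥ d) i := rfl
  have e3 : d ⬝ᵥ d = ∑ i, d i ^ 2 := Finset.sum_congr rfl fun i _ => by ring
  rw [e1] at k3
  have e4 : (-d) ⬝ᵥ (Nᵀ *ᵥ v) = - (v ⬝ᵥ (N *ᵥ d)) := by rw [neg_dotProduct, tr]
  linarith

lemma ext_rect {t : ℝ} (ht : 0 ≤ t) (F : ℝ → ℝ → ℝ)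
    (hF : ContinuousOn (fun p : ℝ × ℝ => F p.1 p.2) (Icc 0 t ×ˢ Icc (0:ℝ) 1)) :
    ∃ G : ℝ → ℝ → ℝ, Continuous (Function.uncurry G) ∧
      ∀ s ∈ Icc 0 t, ∀ z ∈ Icc (0:ℝ) 1, G s z = F s z := by
  refine ⟨fun s z => F (projIcc 0 t ht s) (projIcc 0 1 zero_le_one z), ?_, ?_⟩
  · have hc : Continuous (fun p : ℝ × ℝ =>
        (((projIcc 0 t ht p.1 : Icc 0 t) : ℝ), ((projIcc 0 1 zero_le_one p.2 : Icc (0:ℝ) 1) : ℝ))) :=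
      ((continuous_subtype_val.comp (continuous_projIcc.comp continuous_fst))).prodMk
        (continuous_subtype_val.comp (continuous_projIcc.comp continuous_snd))
    exact hF.comp_continuous hc fun p => ⟨Subtype.coe_prop _, Subtype.coe_prop _⟩
  · intro s hs z hz
    simp only [projIcc_of_mem ht hs, projIcc_of_mem zero_le_one hz]

lemma ftc_within {a b : ℝ} (hab : a ≤ b) (f f' : ℝ → ℝ)
    (hd : ∀ x ∈ Icc a b, HasDerivWithinAt f (f' x) (Icc a b) x)
    (hc : ContinuousOn f' (Icc a b)) : ∫ x in a..b, f' x = f b - f a := by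
  apply intervalIntegral.integral_eq_sub_of_hasDerivAt_of_le hab
  · exact fun x hx => (hd x hx).continuousWithinAt
  · exact fun x hx => (hd x (Ioo_subset_Icc_self hx)).hasDerivAt (Icc_mem_nhds hx.1 hx.2)
  · exact hc.intervalIntegrable_of_Icc hab

lemma slice_cont {t : ℝ} (F : ℝ → ℝ → ℝ)
    (hF : ContinuousOn (fun p : ℝ × ℝ => F p.1 p.2) (Icc 0 t ×ˢ Icc (0:ℝ) 1))
    {s : ℝ} (hs : s ∈ Icc 0 t) : ContinuousOn (fun z => F s z) (Icc 0 1) :=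
  hF.comp (f := fun z : ℝ => (s, z)) (by fun_prop) fun z hz => ⟨hs, hz⟩

lemma swap_ineq {t : ℝ} (ht : 0 ≤ t) (f ft D : ℝ → ℝ → ℝ) (C : ℝ)
    (hf : ContinuousOn (fun p : ℝ × ℝ => f p.1 p.2) (Icc 0 t ×ˢ Icc (0:ℝ) 1))
    (hft : ContinuousOn (fun p : ℝ × ℝ => ft p.1 p.2) (Icc 0 t ×ˢ Icc (0:ℝ) 1))
    (hD : ContinuousOn (fun p : ℝ × ℝ => D p.1 p.2) (Icc 0 t ×ˢ Icc (0:ℝ) 1))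
    (hder : ∀ s ∈ Icc 0 t, ∀ z ∈ Icc (0:ℝ) 1,
      HasDerivWithinAt (fun s => f s z) (ft s z) (Icc 0 t) s)
    (hb : ∀ s ∈ Icc 0 t, ∫ z in (0:ℝ)..1, ft s z ≤ C * ∫ z in (0:ℝ)..1, D s z) :
    ∫ z in (0:ℝ)..1, f t z ≤ (∫ z in (0:ℝ)..1, f 0 z)
      + C * ∫ s in (0:ℝ)..t, ∫ z in (0:ℝ)..1, D s z := by
  obtain ⟨g, hg, hge⟩ := ext_rect ht ft hft
  obtain ⟨E, hE, hEe⟩ := ext_rect ht D hD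
  have u1 : uIcc (0:ℝ) 1 = Icc 0 1 := uIcc_of_le zero_le_one
  have ut : uIcc (0:ℝ) t = Icc 0 t := uIcc_of_le ht
  have i1 : IntervalIntegrable (fun z => f t z) MeasureTheory.volume 0 1 :=
    (slice_cont f hf (right_mem_Icc.2 ht)).intervalIntegrable_of_Icc zero_le_one
  have i0 : IntervalIntegrable (fun z => f 0 z) MeasureTheory.volume 0 1 :=
    (slice_cont f hf (left_mem_Icc.2 ht)).intervalIntegrable_of_Icc zero_le_one
  have h1 : (∫ z in (0:ℝ)..1, f t z) - (∫ z in (0:ℝ)..1, f 0 z)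
      = ∫ z in (0:ℝ)..1, ∫ s in (0:ℝ)..t, g s z := by
    rw [← intervalIntegral.integral_sub i1 i0]
    apply intervalIntegral.integral_congr
    intro z hz
    rw [u1] at hz
    symm
    refine ftc_within ht (fun s => f s z) (fun s => g s z) ?_ ?_
    · intro s hs
      rw [hge s hs z hz]
      exact hder s hs z hz
    · exact (hg.comp (f := fun s : ℝ => (s, z)) (by fun_prop)).continuousOn
  have h2 : ∫ z in (0:ℝ)..1, ∫ s in (0:ℝ)..t, g s z = ∫ s in (0:ℝ)..t, ∫ z in (0:ℝ)..1, g s z := by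
    symm
    apply MeasureTheory.intervalIntegral_intervalIntegral_swap
    refine (hg.continuousOn.integrableOn_compact (isCompact_uIcc.prod isCompact_uIcc)).mono_set
      (prod_mono uIoc_subset_uIcc uIoc_subset_uIcc)
  have h3 : ∫ s in (0:ℝ)..t, ∫ z in (0:ℝ)..1, g s z ≤ ∫ s in (0:ℝ)..t, C * ∫ z in (0:ℝ)..1, E s z := by
    apply intervalIntegral.integral_mono_on ht
    · exact (intervalIntegral.continuous_parametric_intervalIntegral_of_continuous' hg 0 1).intervalIntegrable _ _
    · exact ((intervalIntegral.continuous_parametric_intervalIntegral_of_continuous' hE 0 1).const_mul C).intervalIntegrable _ _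
    · intro s hs
      have a1 : ∫ z in (0:ℝ)..1, g s z = ∫ z in (0:ℝ)..1, ft s z :=
        intervalIntegral.integral_congr fun z hz => hge s hs z (u1 ▸ hz)
      have a2 : ∫ z in (0:ℝ)..1, E s z = ∫ z in (0:ℝ)..1, D s z :=
        intervalIntegral.integral_congr fun z hz => hEe s hs z (u1 ▸ hz)
      rw [a1, a2]
      exact hb s hs
  have h4 : ∫ s in (0:ℝ)..t, ∫ z in (0:ℝ)..1, E s z = ∫ s in (0:ℝ)..t, ∫ z in (0:ℝ)..1, D s z :=
    intervalIntegral.integral_congr fun s hs =>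
      intervalIntegral.integral_congr fun z hz => hEe s (ut ▸ hs) z (u1 ▸ hz)
  rw [intervalIntegral.integral_const_mul, h4] at h3
  linarith

lemma enorm'_sq {q : ℕ} (x : Fin q → ℝ) : enorm' x ^ 2 = ∑ i, x i ^ 2 :=
  Real.sq_sqrt (Finset.sum_nonneg fun i _ => sq_nonneg _)

lemma sqrt_add_le' (a b : ℝ) (ha : 0 ≤ a) (hb : 0 ≤ b) : √(a + b) ≤ √a + √b := by
  rw [Real.sqrt_le_left (by positivity)]
  nlinarith [Real.sq_sqrt ha, Real.sq_sqrt hb, Real.sqrt_nonneg a, Real.sqrt_nonneg b,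
    mul_nonneg (Real.sqrt_nonneg a) (Real.sqrt_nonneg b)]

lemma lyap_ineq {n q : ℕ} (l p : Fin n → ℝ) (hp : ∀ i, 0 < p i) (μ α : ℝ) (hμ : 0 < μ) (hα : 0 < α)
    (N : Matrix (Fin n) (Fin q) ℝ) 
    (hpt : ∀ (x : Fin n → ℝ) (d : Fin q → ℝ), α * ∑ i, (p i)⁻¹ * x i ^ 2 + 2 * ∑ i, (p i)⁻¹ * x i * (N *ᵥ d) i
      ≤ μ * ∑ i, l i / p i * x i ^ 2 + ∑ i, d i ^ 2)
    (t : ℝ) (ht : 0 ≤ t)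
    (X Xt Xz : ℝ → ℝ → Fin n → ℝ) (d : ℝ → ℝ → Fin q → ℝ)
    (hXcont : ContinuousOn (fun p : ℝ × ℝ => X p.1 p.2) (Icc 0 t ×ˢ Icc (0:ℝ) 1))
    (hXtcont : ContinuousOn (fun p : ℝ × ℝ => Xt p.1 p.2) (Icc 0 t ×ˢ Icc (0:ℝ) 1))
    (hXzcont : ContinuousOn (fun p : ℝ × ℝ => Xz p.1 p.2) (Icc 0 t ×ˢ Icc (0:ℝ) 1))
    (hXt : ∀ s ∈ Icc (0:ℝ) t, ∀ z ∈ Icc (0:ℝ) 1,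
      HasDerivWithinAt (fun s => X s z) (Xt s z) (Icc (0:ℝ) t) s)
    (hXz : ∀ s ∈ Icc (0:ℝ) t, ∀ z ∈ Icc (0:ℝ) 1,
      HasDerivWithinAt (fun w => X s w) (Xz s z) (Icc (0:ℝ) 1) z)
    (hdcont : ContinuousOn (fun p : ℝ × ℝ => d p.1 p.2) (Icc 0 t ×ˢ Icc (0:ℝ) 1))
    (hpde : ∀ s ∈ Icc (0:ℝ) t, ∀ z ∈ Icc (0:ℝ) 1,
      Xt s z + (diagonal l).mulVec (Xz s z) = N.mulVec (d s z))
    (hbc : ∀ s ∈ Icc (0:ℝ) t,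
      ∑ i, l i / p i * X s 0 i ^ 2 ≤ Real.exp (-μ) * ∑ i, l i / p i * X s 1 i ^ 2) :
    ∫ z in (0:ℝ)..1, Real.exp (α * t) * Real.exp (-μ * z) * ∑ i, (p i)⁻¹ * X t z i ^ 2 ≤
      (∫ z in (0:ℝ)..1, Real.exp (α * 0) * Real.exp (-μ * z) * ∑ i, (p i)⁻¹ * X 0 z i ^ 2) +
      Real.exp (α * t) * ∫ s in (0:ℝ)..t, ∫ z in (0:ℝ)..1, ∑ i, d s z i ^ 2 := by
  have cX : ∀ i, ContinuousOn (fun p : ℝ × ℝ => X p.1 p.2 i) (Icc 0 t ×ˢ Icc (0:ℝ) 1) :=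
    fun i => (continuous_apply i).comp_continuousOn hXcont
  have cXt : ∀ i, ContinuousOn (fun p : ℝ × ℝ => Xt p.1 p.2 i) (Icc 0 t ×ˢ Icc (0:ℝ) 1) :=
    fun i => (continuous_apply i).comp_continuousOn hXtcont
  have cXz : ∀ i, ContinuousOn (fun p : ℝ × ℝ => Xz p.1 p.2 i) (Icc 0 t ×ˢ Icc (0:ℝ) 1) :=
    fun i => (continuous_apply i).comp_continuousOn hXzcont
  have cd : ∀ i, ContinuousOn (fun p : ℝ × ℝ => d p.1 p.2 i) (Icc 0 t ×ˢ Icc (0:ℝ) 1) :=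
    fun i => (continuous_apply i).comp_continuousOn hdcont
  have cft : ContinuousOn (fun y : ℝ × ℝ => Real.exp (α * y.1) * Real.exp (-μ * y.2) *
      (α * ∑ i, (p i)⁻¹ * X y.1 y.2 i ^ 2 + 2 * ∑ i, (p i)⁻¹ * X y.1 y.2 i * Xt y.1 y.2 i))
      (Icc 0 t ×ˢ Icc (0:ℝ) 1) := by fun_prop
  have cD : ContinuousOn (fun y : ℝ × ℝ => ∑ i, d y.1 y.2 i ^ 2) (Icc 0 t ×ˢ Icc (0:ℝ) 1) := by
    fun_prop
  have cG : ContinuousOn (fun y : ℝ × ℝ => Real.exp (-μ * y.2) *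
      (-μ * ∑ i, l i / p i * X y.1 y.2 i ^ 2 + 2 * ∑ i, l i / p i * X y.1 y.2 i * Xz y.1 y.2 i))
      (Icc 0 t ×ˢ Icc (0:ℝ) 1) := by fun_prop
  refine swap_ineq ht (fun s z => Real.exp (α * s) * Real.exp (-μ * z) * ∑ i, (p i)⁻¹ * X s z i ^ 2)
    (fun s z => Real.exp (α * s) * Real.exp (-μ * z) *
      (α * ∑ i, (p i)⁻¹ * X s z i ^ 2 + 2 * ∑ i, (p i)⁻¹ * X s z i * Xt s z i))
    (fun s z => ∑ i, d s z i ^ 2) (Real.exp (α * t)) (by fun_prop) cft cD ?_ ?_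
  · intro s hs z hz
    have hx := hasDerivWithinAt_pi.1 (hXt s hs z hz)
    have h1 : HasDerivWithinAt (fun s => ∑ i, (p i)⁻¹ * X s z i ^ 2)
        (∑ i, (p i)⁻¹ * (2 * X s z i * Xt s z i)) (Icc 0 t) s := by
      refine HasDerivWithinAt.fun_sum fun i _ => ?_
      have := ((hx i).pow 2).const_mul (p i)⁻¹
      simpa using this
    have h2 : HasDerivWithinAt (fun s => Real.exp (α * s) * Real.exp (-μ * z))
        (Real.exp (α * s) * α * Real.exp (-μ * z)) (Icc 0 t) s := by
      have := (((hasDerivAt_id s).const_mul α).exp.mul_const (Real.exp (-μ * z))).hasDerivWithinAt (s := Icc 0 t)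
      simpa using this
    refine (h2.mul h1).congr_deriv ?_
    have : ∑ i, (p i)⁻¹ * (2 * X s z i * Xt s z i) = 2 * ∑ i, (p i)⁻¹ * X s z i * Xt s z i := by
      rw [Finset.mul_sum]; exact Finset.sum_congr rfl fun i _ => by ring
    rw [this]; ring
  · intro s hs
    have c1 := slice_cont (fun s z => Real.exp (α * s) * Real.exp (-μ * z) *
      (α * ∑ i, (p i)⁻¹ * X s z i ^ 2 + 2 * ∑ i, (p i)⁻¹ * X s z i * Xt s z i)) cft hs
    have c2 := slice_cont (fun s z => ∑ i, d s z i ^ 2) cD hs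
    have c3 := slice_cont (fun s z => Real.exp (-μ * z) *
      (-μ * ∑ i, l i / p i * X s z i ^ 2 + 2 * ∑ i, l i / p i * X s z i * Xz s z i)) cG hs
    have i2 := c2.intervalIntegrable_of_Icc (μ := MeasureTheory.volume) zero_le_one
    have i3 := c3.intervalIntegrable_of_Icc (μ := MeasureTheory.volume) zero_le_one
    have I3 := ftc_within zero_le_one (fun z => Real.exp (-μ * z) * ∑ i, l i / p i * X s z i ^ 2) _ (by
      intro z hz
      have hx := hasDerivWithinAt_pi.1 (hXz s hs z hz)
      have h1 : HasDerivWithinAt (fun z => ∑ i, l i / p i * X s z i ^ 2)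
          (∑ i, l i / p i * (2 * X s z i * Xz s z i)) (Icc 0 1) z := by
        refine HasDerivWithinAt.fun_sum fun i _ => ?_
        have := ((hx i).pow 2).const_mul (l i / p i)
        simpa using this
      have h2 : HasDerivWithinAt (fun z => Real.exp (-μ * z))
          (Real.exp (-μ * z) * (-μ)) (Icc 0 1) z := by
        have := (((hasDerivAt_id z).const_mul (-μ)).exp).hasDerivWithinAt (s := Icc 0 1)
        simpa using this
      refine (h2.mul h1).congr_deriv ?_
      have : ∑ i, l i / p i * (2 * X s z i * Xz s z i) = 2 * ∑ i, l i / p i * X s z i * Xz s z i := by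
        rw [Finset.mul_sum]; exact Finset.sum_congr rfl fun i _ => by ring
      rw [this]
      show _ = Real.exp (-μ * z) *
        (-μ * ∑ i, l i / p i * X s z i ^ 2 + 2 * ∑ i, l i / p i * X s z i * Xz s z i)
      ring) c3
    have hb := hbc s hs
    have step : ∫ z in (0:ℝ)..1, Real.exp (α * s) * Real.exp (-μ * z) *
        (α * ∑ i, (p i)⁻¹ * X s z i ^ 2 + 2 * ∑ i, (p i)⁻¹ * X s z i * Xt s z i) ≤
        ∫ z in (0:ℝ)..1, Real.exp (α * s) * (∑ i, d s z i ^ 2 - Real.exp (-μ * z) *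
        (-μ * ∑ i, l i / p i * X s z i ^ 2 + 2 * ∑ i, l i / p i * X s z i * Xz s z i)) := by
      apply intervalIntegral.integral_mono_on zero_le_one
      · exact c1.intervalIntegrable_of_Icc zero_le_one
      · exact (i2.sub i3).const_mul _
      · intro z hz
        rw [mul_assoc]
        apply mul_le_mul_of_nonneg_left _ (Real.exp_pos _).le
        have e : ∑ i, (p i)⁻¹ * X s z i * Xt s z i = ∑ i, (p i)⁻¹ * X s z i * (N *ᵥ d s z) i
            - ∑ i, l i / p i * X s z i * Xz s z i := by
          rw [← Finset.sum_sub_distrib]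
          refine Finset.sum_congr rfl fun i _ => ?_
          rw [← hpde s hs z hz]
          simp only [Pi.add_apply, Matrix.mulVec_diagonal]
          ring
        rw [e]
        have h := hpt (X s z) (d s z)
        have hE1 : Real.exp (-μ * z) ≤ 1 := Real.exp_le_one_iff.2 (by nlinarith [hz.1])
        have hE0 := Real.exp_pos (-μ * z)
        have hd0 : 0 ≤ ∑ i, d s z i ^ 2 := Finset.sum_nonneg fun i _ => sq_nonneg _
        nlinarith [mul_le_mul_of_nonneg_left h hE0.le]
    refine step.trans ?_
    rw [intervalIntegral.integral_const_mul, intervalIntegral.integral_sub i2 i3, I3]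
    have hd0 : 0 ≤ ∫ z in (0:ℝ)..1, ∑ i, d s z i ^ 2 :=
      intervalIntegral.integral_nonneg zero_le_one fun z _ => Finset.sum_nonneg fun i _ => sq_nonneg _
    have hes : Real.exp (α * s) ≤ Real.exp (α * t) :=
      Real.exp_le_exp.2 (mul_le_mul_of_nonneg_left hs.2 hα.le)
    refine (mul_le_mul_of_nonneg_left (b := _) (c := ∫ z in (0:ℝ)..1, ∑ i, d s z i ^ 2) ?_ (Real.exp_pos _).le).trans
      (mul_le_mul_of_nonneg_right hes hd0)
    simp only [mul_one, mul_zero, Real.exp_zero, one_mul]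
    linarith

/-- Corollary 1 (classical-solution version): feasibility of the LMIs
(D1), (D2), (D3) yields, with `K = WQ⁻¹`, the ISS bound with gain `√λ_max(Q) e^{μ/2}`.
Here `Q` is diagonal, so `λ_min(Q) = ⨅ i, Q i i` and `λ_max(Q) = ⨆ i, Q i i`. -/
theorem corollary_ISS_design {n m q : ℕ}
    (Λ : Matrix (Fin n) (Fin n) ℝ) (hΛdiag : Λ.IsDiag) (hΛpos : ∀ i, 0 < Λ i i)
    (H : Matrix (Fin n) (Fin n) ℝ) (B : Matrix (Fin n) (Fin m) ℝ)
    (N : Matrix (Fin n) (Fin q) ℝ)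
    (ubar : Fin m → ℝ) (hubar : ∀ i, 0 < ubar i)
    (Q : Matrix (Fin n) (Fin n) ℝ) (hQdiag : Q.IsDiag) (hQpos : ∀ i, 0 < Q i i)
    (S : Matrix (Fin m) (Fin m) ℝ) (hSdiag : S.IsDiag) (hSpos : ∀ i, 0 < S i i)
    (Γhat : Matrix (Fin n) (Fin n) ℝ) (hΓhatsymm : Γhat.IsSymm) (hΓhatpos : Γhat.PosDef)
    (μ α : ℝ) (hμ : 0 < μ) (hα : 0 < α)
    (W : Matrix (Fin m) (Fin n) ℝ)
    (hD1 : (-(Matrix.fromBlocks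
        (Matrix.fromBlocks
          (-(Q * Λ⁻¹)) (H * Q + B * W)
          ((H * Q + B * W)ᵀ) (-(Real.exp (-μ) • (Λ * Q))))
        (Matrix.fromRows (B * S) (-Wᵀ))
        (Matrix.fromCols ((B * S)ᵀ) (-W))
        (-(2 • S)))).PosSemidef)
    (hD2 : (Matrix.fromBlocks Γhat N Nᵀ (1 : Matrix (Fin q) (Fin q) ℝ)).PosSemidef)
    (hD3 : (-(Q * (α • (1 : Matrix (Fin n) (Fin n) ℝ) - μ • Λ) + Γhat)).PosSemidef)
    (T₀ : ℝ) (hT₀ : 0 < T₀)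
    (X Xt Xz : ℝ → ℝ → Fin n → ℝ) (d : ℝ → ℝ → Fin q → ℝ)
    (hXcont : ContinuousOn (fun p : ℝ × ℝ => X p.1 p.2) (Icc 0 T₀ ×ˢ Icc (0:ℝ) 1))
    (hXtcont : ContinuousOn (fun p : ℝ × ℝ => Xt p.1 p.2) (Icc 0 T₀ ×ˢ Icc (0:ℝ) 1))
    (hXzcont : ContinuousOn (fun p : ℝ × ℝ => Xz p.1 p.2) (Icc 0 T₀ ×ˢ Icc (0:ℝ) 1))
    (hXt : ∀ t ∈ Icc (0:ℝ) T₀, ∀ z ∈ Icc (0:ℝ) 1,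
      HasDerivWithinAt (fun s => X s z) (Xt t z) (Icc (0:ℝ) T₀) t)
    (hXz : ∀ t ∈ Icc (0:ℝ) T₀, ∀ z ∈ Icc (0:ℝ) 1,
      HasDerivWithinAt (fun w => X t w) (Xz t z) (Icc (0:ℝ) 1) z)
    (hdcont : ContinuousOn (fun p : ℝ × ℝ => d p.1 p.2) (Icc 0 T₀ ×ˢ Icc (0:ℝ) 1))
    (hpde : ∀ t ∈ Icc (0:ℝ) T₀, ∀ z ∈ Icc (0:ℝ) 1,
      Xt t z + Λ.mulVec (Xz t z) = N.mulVec (d t z))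
    (hbc : ∀ t ∈ Icc (0:ℝ) T₀,
      X t 0 = (H + B * (W * Q⁻¹)).mulVec (X t 1) +
        B.mulVec (deadzone ubar ((W * Q⁻¹).mulVec (X t 1)))) :
    ∀ t ∈ Icc (0:ℝ) T₀,
      Real.sqrt (∫ z in (0:ℝ)..1, enorm' (X t z) ^ 2) ≤
        Real.sqrt ((⨆ i, Q i i) / (⨅ i, Q i i)) * Real.exp (μ / 2) *
            Real.exp (-(α / 2) * t) * Real.sqrt (∫ z in (0:ℝ)..1, enorm' (X 0 z) ^ 2) +
          Real.sqrt (⨆ i, Q i i) * Real.exp (μ / 2) *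
            Real.sqrt (∫ θ in (0:ℝ)..t, ∫ z in (0:ℝ)..1, enorm' (d θ z) ^ 2) := by
  intro t ht
  obtain ⟨l, rfl⟩ : ∃ l : Fin _ → ℝ, Λ = Matrix.diagonal l := ⟨_, hΛdiag.diagonal_diag.symm⟩
  obtain ⟨p, rfl⟩ : ∃ p : Fin _ → ℝ, Q = Matrix.diagonal p := ⟨_, hQdiag.diagonal_diag.symm⟩
  obtain ⟨s, rfl⟩ : ∃ s : Fin _ → ℝ, S = Matrix.diagonal s := ⟨_, hSdiag.diagonal_diag.symm⟩
  simp only [Matrix.diagonal_apply_eq] at hΛpos hQpos hSpos ⊢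
  simp only [enorm'_sq]
  have hsub : Icc 0 t ⊆ Icc 0 T₀ := Icc_subset_Icc_right ht.2
  have hsub2 : Icc 0 t ×ˢ Icc (0:ℝ) 1 ⊆ Icc 0 T₀ ×ˢ Icc (0:ℝ) 1 := prod_mono hsub subset_rfl
  have hV := lyap_ineq l p hQpos μ α hμ hα N
    (pt_ineq l p hQpos N Γhat μ α hD2 hD3) t ht.1 X Xt Xz d (hXcont.mono hsub2)
    (hXtcont.mono hsub2) (hXzcont.mono hsub2)
    (fun s hs z hz => (hXt s (hsub hs) z hz).mono hsub)
    (fun s hs z hz => hXz s (hsub hs) z hz) (hdcont.mono hsub2)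
    (fun s hs z hz => hpde s (hsub hs) z hz)
    (fun r hr => bc_ineq l p s hΛpos hQpos hSpos H B ubar hubar μ W hD1 _ _ (hbc r (hsub hr)))
  rcases isEmpty_or_nonempty (Fin n) with hn | hn
  · simp
  obtain ⟨j, hj⟩ := exists_eq_ciInf_of_finite (f := p)
  have hm : 0 < ⨅ i, p i := hj ▸ hQpos j
  have hmle : ∀ i, ⨅ i, p i ≤ p i := fun i => ciInf_le (Set.finite_range p).bddBelow i
  have hMge : ∀ i, p i ≤ ⨆ i, p i := fun i => le_ciSup (Set.finite_range p).bddAbove i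
  have hM : 0 < ⨆ i, p i := (hQpos j).trans_le (hMge j)
  generalize (⨅ i, p i) = m0 at *
  generalize (⨆ i, p i) = M at *
  have cX : ∀ i, ContinuousOn (fun p : ℝ × ℝ => X p.1 p.2 i) (Icc 0 T₀ ×ˢ Icc (0:ℝ) 1) :=
    fun i => (continuous_apply i).comp_continuousOn hXcont
  have cS : ∀ r ∈ Icc 0 T₀, ∀ i, ContinuousOn (fun z => X r z i) (Icc (0:ℝ) 1) :=
    fun r hr i => slice_cont (fun s z => X s z i) (cX i) hr
  have h0 : (0:ℝ) ∈ Icc 0 T₀ := ⟨le_rfl, hT₀.le⟩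
  have cS0 := cS 0 h0
  have cSt := cS t ht
  have lo : Real.exp (α * t) * (Real.exp (-μ) * M⁻¹) * ∫ z in (0:ℝ)..1, ∑ i, X t z i ^ 2 ≤
      ∫ z in (0:ℝ)..1, Real.exp (α * t) * Real.exp (-μ * z) * ∑ i, (p i)⁻¹ * X t z i ^ 2 := by
    rw [← intervalIntegral.integral_const_mul]
    apply intervalIntegral.integral_mono_on zero_le_one
    · exact ContinuousOn.intervalIntegrable_of_Icc zero_le_one (by fun_prop)
    · exact ContinuousOn.intervalIntegrable_of_Icc zero_le_one (by fun_prop)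
    · intro z hz
      have e1 : M⁻¹ * ∑ i, X t z i ^ 2 ≤ ∑ i, (p i)⁻¹ * X t z i ^ 2 := by
        rw [Finset.mul_sum]
        exact Finset.sum_le_sum fun i _ => mul_le_mul_of_nonneg_right
          (inv_anti₀ (hQpos i) (hMge i)) (sq_nonneg _)
      have e2 : Real.exp (-μ) ≤ Real.exp (-μ * z) := Real.exp_le_exp.2 (by nlinarith [hz.2])
      have e3 : 0 ≤ M⁻¹ * ∑ i, X t z i ^ 2 :=
        mul_nonneg (inv_pos.2 hM).le (Finset.sum_nonneg fun i _ => sq_nonneg _)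
      rw [mul_assoc, mul_assoc, mul_assoc]
      exact mul_le_mul_of_nonneg_left (mul_le_mul e2 e1 e3 (Real.exp_pos _).le) (Real.exp_pos _).le
  have hi : (∫ z in (0:ℝ)..1, Real.exp (α * 0) * Real.exp (-μ * z) * ∑ i, (p i)⁻¹ * X 0 z i ^ 2) ≤
      m0⁻¹ * ∫ z in (0:ℝ)..1, ∑ i, X 0 z i ^ 2 := by
    rw [← intervalIntegral.integral_const_mul]
    apply intervalIntegral.integral_mono_on zero_le_one
    · exact ContinuousOn.intervalIntegrable_of_Icc zero_le_one (by fun_prop)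
    · exact ContinuousOn.intervalIntegrable_of_Icc zero_le_one (by fun_prop)
    · intro z hz
      have e1 : ∑ i, (p i)⁻¹ * X 0 z i ^ 2 ≤ m0⁻¹ * ∑ i, X 0 z i ^ 2 := by
        rw [Finset.mul_sum]
        exact Finset.sum_le_sum fun i _ => mul_le_mul_of_nonneg_right
          (inv_anti₀ hm (hmle i)) (sq_nonneg _)
      have e2 : Real.exp (-μ * z) ≤ 1 := Real.exp_le_one_iff.2 (by nlinarith [hz.1])
      have e3 : 0 ≤ ∑ i, (p i)⁻¹ * X 0 z i ^ 2 :=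
        Finset.sum_nonneg fun i _ => mul_nonneg (inv_pos.2 (hQpos i)).le (sq_nonneg _)
      rw [mul_zero, Real.exp_zero, one_mul]
      exact (mul_le_of_le_one_left e3 e2).trans e1
  have hA0 : 0 ≤ ∫ z in (0:ℝ)..1, ∑ i, X 0 z i ^ 2 :=
    intervalIntegral.integral_nonneg zero_le_one fun z _ => Finset.sum_nonneg fun i _ => sq_nonneg _
  have hDd : 0 ≤ ∫ s in (0:ℝ)..t, ∫ z in (0:ℝ)..1, ∑ i, d s z i ^ 2 :=
    intervalIntegral.integral_nonneg ht.1 fun s _ => intervalIntegral.integral_nonneg zero_le_one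
      fun z _ => Finset.sum_nonneg fun i _ => sq_nonneg _
  have fin := lo.trans (hV.trans (add_le_add_left hi _))
  clear lo hV hi
  generalize (∫ z in (0:ℝ)..1, ∑ i, X t z i ^ 2) = At at *
  generalize (∫ z in (0:ℝ)..1, ∑ i, X 0 z i ^ 2) = A0 at *
  generalize (∫ s in (0:ℝ)..t, ∫ z in (0:ℝ)..1, ∑ i, d s z i ^ 2) = Dd at *
  have q1 : Real.exp (μ / 2) = √(Real.exp μ) := by rw [Real.exp_half]
  have q2 : Real.exp (-(α / 2) * t) = √(Real.exp (-(α * t))) := by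
    rw [← Real.exp_half]; congr 1; ring
  have p1 := Real.exp_pos μ
  have p2 := Real.exp_pos (α * t)
  rw [q1, q2, ← Real.sqrt_mul (by positivity), ← Real.sqrt_mul (by positivity),
    ← Real.sqrt_mul (by positivity), ← Real.sqrt_mul (by positivity), ← Real.sqrt_mul (by positivity)]
  refine le_trans (Real.sqrt_le_sqrt ?_) (sqrt_add_le' _ _ (by positivity) (by positivity))
  rw [Real.exp_neg] at fin ⊢
  generalize Real.exp μ = E at *
  generalize Real.exp (α * t) = F at *
  have := mul_le_mul_of_nonneg_left fin (show 0 ≤ M * E * F⁻¹ by positivity)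
  calc At = M * E * F⁻¹ * (F * (E⁻¹ * M⁻¹) * At) := by field_simp
    _ ≤ _ := this
    _ = _ := by field_simp
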